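/- Let 0 ≤ μ ≤ 1, η = 0, and let γ1 = √((1−μ)/2), γ0 = −(1/2)√((1−μ)/2) + √(μ/2 + (1−μ)/8). Define the symmetric matrix G(μ) ∈ ℝ^{2×2} by G₁₁ = 1 − γ0², G₁₂ = G₂₁ = −γ0γ1 + (μ − 1)/2, G₂₂ = 1 − γ0² − γ1². Then the eigenvalues of G(μ) are λ₁ = 1/2 + (1/4)√(1−μ)√(3μ+1) − (1/4)√((3+μ)(1−μ) + 2(1−μ)√(1−μ)√(3μ+1)) and λ₂ = 1/2 + (1/4)√(1−μ)√(3μ+1) + (1/4)√((3+μ)(1−μ) + 2(1−μ)√(1−μ)√(3μ+1)), and both λ₁ > 0 and λ₂ > 0 for every μ ∈ [0,1]; in particular G(μ) is positive definite for every μ ∈ [0,1]. -/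

import Mathlib

open Real

/-!
The equations of the reduced system add up to `(γ0 + γ1 + γ2) ^ 2 = 0`, and together they turn the
weighting matrix into a perfect square, `G = C * C` with `C = !![γ1, γ2; γ2, 0]`. The eigenvalues
of `G` are therefore the squares of those of `C`, namely of `(γ1 ± √(γ1 ^ 2 + 4 * γ2 ^ 2)) / 2`,
whose product is `-γ2 ^ 2`. The choice of signs in the explicit solution is `0 ≤ γ1` and `γ2 ≤ γ0`,
which forces `γ2 < 0`, so `C` is invertible and `G` is positive definite.
-/

theorem det_sub_smul_one_fin_two {R : Type*} [CommRing R] (A : Matrix (Fin 2) (Fin 2) R) (x : R) :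
    (A - x • (1 : Matrix (Fin 2) (Fin 2) R)).det = x ^ 2 - A.trace * x + A.det := by
  simp only [Matrix.det_fin_two, Matrix.trace_fin_two, Matrix.sub_apply, Matrix.smul_apply,
    Matrix.one_apply_eq, Matrix.one_apply_ne zero_ne_one, Matrix.one_apply_ne one_ne_zero,
    smul_eq_mul]
  ring

theorem trace_mul_self_fin_two {R : Type*} [CommRing R] (A : Matrix (Fin 2) (Fin 2) R) :
    (A * A).trace = A.trace ^ 2 - 2 * A.det := by
  simp only [Matrix.trace_fin_two, Matrix.det_fin_two, Matrix.mul_apply, Fin.sum_univ_two]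
  ring

theorem det_mul_self_sub_smul_one_fin_two {R : Type*} [CommRing R] (A : Matrix (Fin 2) (Fin 2) R)
    {p q : R} (htr : A.trace = p + q) (hdet : A.det = p * q) (x : R) :
    (A * A - x • (1 : Matrix (Fin 2) (Fin 2) R)).det = (x - p ^ 2) * (x - q ^ 2) := by
  rw [det_sub_smul_one_fin_two, trace_mul_self_fin_two, Matrix.det_mul, htr, hdet]
  ring

theorem posDef_mul_self_of_isHermitian {n R : Type*} [Fintype n] [DecidableEq n] [Ring R]
    [NoZeroDivisors R] [PartialOrder R] [StarRing R] [StarOrderedRing R] {A : Matrix n n R}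
    (hA : A.IsHermitian) (hunit : IsUnit A) : (A * A).PosDef := by
  simpa only [hA.eq] using
    Matrix.PosDef.conjTranspose_mul_self A (Matrix.mulVec_injective_of_isUnit hunit)

theorem half_sub_sqrt_mul_half_add_sqrt (c d : ℝ) :
    (c - √(c ^ 2 + 4 * d ^ 2)) / 2 * ((c + √(c ^ 2 + 4 * d ^ 2)) / 2) = -d ^ 2 := by
  have hr : √(c ^ 2 + 4 * d ^ 2) ^ 2 = c ^ 2 + 4 * d ^ 2 := sq_sqrt (by positivity)
  linear_combination -hr / 4

/-- The `k = δ = 1` reduced system of the decoupled BDF-1 scheme with multiplier `η = 0`, whose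
solutions `(γ0, γ1, γ2)` define the weighting matrix. -/
structure BDF1ReducedSolution (μ γ0 γ1 γ2 : ℝ) : Prop where
  gamma0_mul_gamma2 : 2 * γ0 * γ2 = -μ
  gamma1_mul_add : 2 * γ0 * γ1 + 2 * γ1 * γ2 = μ - 1
  sum_sq : γ0 ^ 2 + γ1 ^ 2 + γ2 ^ 2 = 1

/-- The weighting matrix `G` of the scheme, with `γ2` eliminated from its entries. -/
noncomputable def bdf1WeightingMatrix (μ γ0 γ1 : ℝ) : Matrix (Fin 2) (Fin 2) ℝ :=
  !![1 - γ0 ^ 2, -(γ0 * γ1) + (μ - 1) / 2;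
     -(γ0 * γ1) + (μ - 1) / 2, 1 - γ0 ^ 2 - γ1 ^ 2]

/-- The symmetric square root `C` (in general indefinite) of the weighting matrix. -/
def bdf1Factor (γ1 γ2 : ℝ) : Matrix (Fin 2) (Fin 2) ℝ :=
  !![γ1, γ2; γ2, 0]

/-- The quantity under the outer square root in the eigenvalues of `G(μ)`: four times the
discriminant of the characteristic polynomial. -/
noncomputable def bdf1Discrim (μ : ℝ) : ℝ :=
  (3 + μ) * (1 - μ) + 2 * (1 - μ) * √(1 - μ) * √(3 * μ + 1)

/-- The eigenvalue `λ₁` of `G(μ)`. -/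
noncomputable def bdf1LowerEigenvalue (μ : ℝ) : ℝ :=
  1 / 2 + (1 / 4) * √(1 - μ) * √(3 * μ + 1) - (1 / 4) * √(bdf1Discrim μ)

/-- The eigenvalue `λ₂` of `G(μ)`. -/
noncomputable def bdf1UpperEigenvalue (μ : ℝ) : ℝ :=
  1 / 2 + (1 / 4) * √(1 - μ) * √(3 * μ + 1) + (1 / 4) * √(bdf1Discrim μ)

/-- The coefficient `γ1` of the explicit solution of the reduced system. -/
noncomputable def bdf1Gamma1 (μ : ℝ) : ℝ :=
  √((1 - μ) / 2)

/-- The coefficient `γ0` of the explicit solution of the reduced system. -/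
noncomputable def bdf1Gamma0 (μ : ℝ) : ℝ :=
  -(1 / 2) * √((1 - μ) / 2) + √(μ / 2 + (1 - μ) / 8)

theorem isHermitian_bdf1Factor (γ1 γ2 : ℝ) : (bdf1Factor γ1 γ2).IsHermitian := by
  ext i j
  fin_cases i <;> fin_cases j <;> simp [bdf1Factor]

theorem det_bdf1Factor (γ1 γ2 : ℝ) : (bdf1Factor γ1 γ2).det = -γ2 ^ 2 := by
  rw [bdf1Factor, Matrix.det_fin_two_of]
  ring

theorem trace_bdf1Factor (γ1 γ2 : ℝ) : (bdf1Factor γ1 γ2).trace = γ1 := by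
  rw [bdf1Factor, Matrix.trace_fin_two_of, add_zero]

namespace BDF1ReducedSolution

variable {μ γ0 γ1 γ2 : ℝ}

theorem add_eq_zero (h : BDF1ReducedSolution μ γ0 γ1 γ2) : γ0 + γ1 + γ2 = 0 := by
  have hsq : (γ0 + γ1 + γ2) ^ 2 = 0 := by
    linear_combination h.gamma0_mul_gamma2 + h.gamma1_mul_add + h.sum_sq
  exact sq_eq_zero_iff.1 hsq

theorem one_sub_eq (h : BDF1ReducedSolution μ γ0 γ1 γ2) : 1 - μ = 2 * γ1 ^ 2 := by
  linear_combination h.gamma1_mul_add - 2 * γ1 * h.add_eq_zero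

theorem three_mul_add_one_eq (h : BDF1ReducedSolution μ γ0 γ1 γ2) :
    3 * μ + 1 = 2 * (γ0 - γ2) ^ 2 := by
  linear_combination 2 * h.gamma0_mul_gamma2 - 2 * h.sum_sq - h.one_sub_eq

theorem weightingMatrix_eq (h : BDF1ReducedSolution μ γ0 γ1 γ2) :
    bdf1WeightingMatrix μ γ0 γ1 = bdf1Factor γ1 γ2 * bdf1Factor γ1 γ2 := by
  have h00 : 1 - γ0 ^ 2 = γ1 * γ1 + γ2 * γ2 := by linear_combination -h.sum_sq
  have h01 : -(γ0 * γ1) + (μ - 1) / 2 = γ1 * γ2 := by linear_combination -h.gamma1_mul_add / 2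
  have h11 : 1 - γ0 ^ 2 - γ1 ^ 2 = γ2 * γ2 := by linear_combination -h.sum_sq
  rw [bdf1WeightingMatrix, bdf1Factor, Matrix.mul_fin_two, h11, h01, h00, mul_comm γ2 γ1]
  simp only [mul_zero, zero_mul, add_zero]

theorem gamma2_neg (h : BDF1ReducedSolution μ γ0 γ1 γ2) (h1 : 0 ≤ γ1) (h02 : γ2 ≤ γ0) :
    γ2 < 0 := by
  by_contra! h2
  have hsum := h.add_eq_zero
  obtain ⟨rfl, rfl, rfl⟩ : γ0 = 0 ∧ γ1 = 0 ∧ γ2 = 0 := by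
    refine ⟨?_, ?_, ?_⟩ <;> linarith
  simpa using h.sum_sq

theorem posDef_weightingMatrix (h : BDF1ReducedSolution μ γ0 γ1 γ2) (h2 : γ2 ≠ 0) :
    (bdf1WeightingMatrix μ γ0 γ1).PosDef := by
  rw [h.weightingMatrix_eq]
  refine posDef_mul_self_of_isHermitian (isHermitian_bdf1Factor γ1 γ2) ?_
  rw [Matrix.isUnit_iff_isUnit_det, det_bdf1Factor, isUnit_iff_ne_zero]
  exact neg_ne_zero.2 (pow_ne_zero 2 h2)

theorem sqrt_mul_sqrt (h : BDF1ReducedSolution μ γ0 γ1 γ2) (h1 : 0 ≤ γ1) (h02 : γ2 ≤ γ0) :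
    √(1 - μ) * √(3 * μ + 1) = 2 * γ1 * (γ0 - γ2) := by
  have hprod : 2 * γ1 ^ 2 * (2 * (γ0 - γ2) ^ 2) = (2 * γ1 * (γ0 - γ2)) ^ 2 := by ring
  rw [h.one_sub_eq, h.three_mul_add_one_eq, ← sqrt_mul (by positivity), hprod,
    sqrt_sq (mul_nonneg (by positivity) (sub_nonneg.2 h02))]

-- Both sides are half the trace of the weighting matrix.
theorem half_add_sqrt_mul_sqrt (h : BDF1ReducedSolution μ γ0 γ1 γ2) (h1 : 0 ≤ γ1)
    (h02 : γ2 ≤ γ0) :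
    1 / 2 + (1 / 4) * √(1 - μ) * √(3 * μ + 1) = γ1 ^ 2 / 2 + γ2 ^ 2 := by
  rw [mul_assoc, h.sqrt_mul_sqrt h1 h02]
  linear_combination (γ0 - γ2) / 2 * h.add_eq_zero - h.sum_sq / 2

theorem sqrt_discrim (h : BDF1ReducedSolution μ γ0 γ1 γ2) (h1 : 0 ≤ γ1) (h02 : γ2 ≤ γ0) :
    √(bdf1Discrim μ) = 2 * γ1 * √(γ1 ^ 2 + 4 * γ2 ^ 2) := by
  have hfactor : 3 + μ + 2 * (√(1 - μ) * √(3 * μ + 1)) = 2 * (γ1 ^ 2 + 4 * γ2 ^ 2) := by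
    linear_combination 8 * h.half_add_sqrt_mul_sqrt h1 h02 - h.one_sub_eq
  have hdiscrim : bdf1Discrim μ = (2 * γ1) ^ 2 * (γ1 ^ 2 + 4 * γ2 ^ 2) :=
    calc bdf1Discrim μ
        = (1 - μ) * (3 + μ + 2 * (√(1 - μ) * √(3 * μ + 1))) := by rw [bdf1Discrim]; ring
      _ = 2 * γ1 ^ 2 * (2 * (γ1 ^ 2 + 4 * γ2 ^ 2)) := by rw [hfactor, h.one_sub_eq]
      _ = (2 * γ1) ^ 2 * (γ1 ^ 2 + 4 * γ2 ^ 2) := by ring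
  rw [hdiscrim, sqrt_mul (sq_nonneg _), sqrt_sq (by positivity)]

theorem lowerEigenvalue_eq (h : BDF1ReducedSolution μ γ0 γ1 γ2) (h1 : 0 ≤ γ1) (h02 : γ2 ≤ γ0) :
    bdf1LowerEigenvalue μ = ((γ1 - √(γ1 ^ 2 + 4 * γ2 ^ 2)) / 2) ^ 2 := by
  have hr : √(γ1 ^ 2 + 4 * γ2 ^ 2) ^ 2 = γ1 ^ 2 + 4 * γ2 ^ 2 := sq_sqrt (by positivity)
  rw [bdf1LowerEigenvalue, h.half_add_sqrt_mul_sqrt h1 h02, h.sqrt_discrim h1 h02]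
  linear_combination -hr / 4

theorem upperEigenvalue_eq (h : BDF1ReducedSolution μ γ0 γ1 γ2) (h1 : 0 ≤ γ1) (h02 : γ2 ≤ γ0) :
    bdf1UpperEigenvalue μ = ((γ1 + √(γ1 ^ 2 + 4 * γ2 ^ 2)) / 2) ^ 2 := by
  have hr : √(γ1 ^ 2 + 4 * γ2 ^ 2) ^ 2 = γ1 ^ 2 + 4 * γ2 ^ 2 := sq_sqrt (by positivity)
  rw [bdf1UpperEigenvalue, h.half_add_sqrt_mul_sqrt h1 h02, h.sqrt_discrim h1 h02]
  linear_combination -hr / 4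

theorem eigenvalues_pos (h : BDF1ReducedSolution μ γ0 γ1 γ2) (h1 : 0 ≤ γ1) (h02 : γ2 ≤ γ0) :
    0 < bdf1LowerEigenvalue μ ∧ 0 < bdf1UpperEigenvalue μ := by
  have hprod :
      (γ1 - √(γ1 ^ 2 + 4 * γ2 ^ 2)) / 2 * ((γ1 + √(γ1 ^ 2 + 4 * γ2 ^ 2)) / 2) ≠ 0 := by
    rw [half_sub_sqrt_mul_half_add_sqrt]
    exact neg_ne_zero.2 (pow_ne_zero 2 (h.gamma2_neg h1 h02).ne)
  rw [h.lowerEigenvalue_eq h1 h02, h.upperEigenvalue_eq h1 h02]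
  exact ⟨sq_pos_of_ne_zero (left_ne_zero_of_mul hprod),
    sq_pos_of_ne_zero (right_ne_zero_of_mul hprod)⟩

theorem det_weightingMatrix_sub_smul_one (h : BDF1ReducedSolution μ γ0 γ1 γ2) (h1 : 0 ≤ γ1)
    (h02 : γ2 ≤ γ0) (x : ℝ) :
    (bdf1WeightingMatrix μ γ0 γ1 - x • (1 : Matrix (Fin 2) (Fin 2) ℝ)).det =
      (x - bdf1LowerEigenvalue μ) * (x - bdf1UpperEigenvalue μ) := by
  rw [h.weightingMatrix_eq, h.lowerEigenvalue_eq h1 h02, h.upperEigenvalue_eq h1 h02]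
  refine det_mul_self_sub_smul_one_fin_two _ ?_ ?_ x
  · rw [trace_bdf1Factor]
    ring
  · rw [det_bdf1Factor, half_sub_sqrt_mul_half_add_sqrt]

end BDF1ReducedSolution

theorem bdf1ReducedSolution_gamma {μ : ℝ} (hμ : -(1 / 3) ≤ μ) (hμ1 : μ ≤ 1) :
    BDF1ReducedSolution μ (bdf1Gamma0 μ) (bdf1Gamma1 μ) (-(bdf1Gamma0 μ + bdf1Gamma1 μ)) := by
  have hs : √((1 - μ) / 2) ^ 2 = (1 - μ) / 2 := sq_sqrt (by linarith)
  have ht : √(μ / 2 + (1 - μ) / 8) ^ 2 = μ / 2 + (1 - μ) / 8 := sq_sqrt (by linarith)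
  rw [bdf1Gamma0, bdf1Gamma1]
  constructor
  · linear_combination hs / 2 - 2 * ht
  · linear_combination -2 * hs
  · linear_combination 3 / 2 * hs + 2 * ht

theorem bdf1Gamma1_nonneg (μ : ℝ) : 0 ≤ bdf1Gamma1 μ :=
  sqrt_nonneg _

theorem neg_add_le_bdf1Gamma0 (μ : ℝ) : -(bdf1Gamma0 μ + bdf1Gamma1 μ) ≤ bdf1Gamma0 μ := by
  rw [bdf1Gamma0, bdf1Gamma1]
  linarith [sqrt_nonneg (μ / 2 + (1 - μ) / 8)]

theorem bdf1_G_eigenvalues_general {μ : ℝ} (hμ : -(1 / 3) ≤ μ) (hμ1 : μ ≤ 1) :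
    (∀ x : ℝ, (bdf1WeightingMatrix μ (bdf1Gamma0 μ) (bdf1Gamma1 μ) -
        x • (1 : Matrix (Fin 2) (Fin 2) ℝ)).det = 0 ↔
          x = bdf1LowerEigenvalue μ ∨ x = bdf1UpperEigenvalue μ) ∧
      0 < bdf1LowerEigenvalue μ ∧ 0 < bdf1UpperEigenvalue μ ∧
      (bdf1WeightingMatrix μ (bdf1Gamma0 μ) (bdf1Gamma1 μ)).PosDef := by
  have hsol := bdf1ReducedSolution_gamma hμ hμ1
  have h1 := bdf1Gamma1_nonneg μ
  have h02 := neg_add_le_bdf1Gamma0 μ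
  obtain ⟨hlower, hupper⟩ := hsol.eigenvalues_pos h1 h02
  refine ⟨fun x ↦ ?_, hlower, hupper,
    hsol.posDef_weightingMatrix (hsol.gamma2_neg h1 h02).ne⟩
  rw [hsol.det_weightingMatrix_sub_smul_one h1 h02, mul_eq_zero, sub_eq_zero, sub_eq_zero]

/-- **Eigenvalues of the BDF-1 weighting matrix.**
For `0 ≤ μ ≤ 1` and `η = 0`, the weighting matrix `G(μ)` built from the explicit
solution of the `k = δ = 1` reduced system has the two explicitly given eigenvalues
`λ₁, λ₂` (the roots of its characteristic polynomial), both are positive on `[0,1]`,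
and `G(μ)` is positive definite for every `μ ∈ [0,1]`. -/
theorem bdf1_G_eigenvalues (μ : ℝ) (hμ0 : 0 ≤ μ) (hμ1 : μ ≤ 1) :
    let γ1 : ℝ := Real.sqrt ((1 - μ) / 2)
    let γ0 : ℝ := -(1 / 2) * Real.sqrt ((1 - μ) / 2) + Real.sqrt (μ / 2 + (1 - μ) / 8)
    let G : Matrix (Fin 2) (Fin 2) ℝ :=
      !![1 - γ0 ^ 2, -(γ0 * γ1) + (μ - 1) / 2;
         -(γ0 * γ1) + (μ - 1) / 2, 1 - γ0 ^ 2 - γ1 ^ 2]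
    let lam1 : ℝ := 1 / 2 + (1 / 4) * Real.sqrt (1 - μ) * Real.sqrt (3 * μ + 1)
      - (1 / 4) * Real.sqrt ((3 + μ) * (1 - μ)
          + 2 * (1 - μ) * Real.sqrt (1 - μ) * Real.sqrt (3 * μ + 1))
    let lam2 : ℝ := 1 / 2 + (1 / 4) * Real.sqrt (1 - μ) * Real.sqrt (3 * μ + 1)
      + (1 / 4) * Real.sqrt ((3 + μ) * (1 - μ)
          + 2 * (1 - μ) * Real.sqrt (1 - μ) * Real.sqrt (3 * μ + 1))
    (∀ lam : ℝ,
        (G - lam • (1 : Matrix (Fin 2) (Fin 2) ℝ)).det = 0 ↔ lam = lam1 ∨ lam = lam2) ∧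
      0 < lam1 ∧ 0 < lam2 ∧ G.PosDef := by
  exact bdf1_G_eigenvalues_general (by linarith) hμ1
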